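/- Lemma 1 (IoT layer): if x ∈ F attains the infimum of T over F, i.e. T(x) ≤ T(y) for all y ∈ F, then the IoT power constraint holds with equality: P_pI + P_cI = P_tI. -/

import Mathlib

/-!
If the IoT power budget had slack, half of it could be added to each of `P_pI` and `P_cI`,
keeping the point feasible.  This strictly lowers the IoT latency when `m < B`, and the
transmission term `m / (W_IF * log₂ (1 + g * P_cI))`, hence the fog and cloud latencies, when
`0 < m`.  In the degenerate cases the latencies that fail to drop are zero (the IoT one for
`m = B`; the fog and cloud ones for `m = 0`, which forces `k = 0`), while the total latency is
always positive because `B > 0`.  So all three new latencies lie strictly below the old total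
latency, contradicting optimality.
-/

open Real

structure Pt where
  m : ℝ
  k : ℝ
  PpI : ℝ
  PcI : ℝ
  PpF : ℝ
  PcF : ℝ
  PpC : ℝ

/-- Feasibility of a point `x = (m, k, P_pI, P_cI, P_pF, P_cF, P_pC)`. -/
def Feasible (B bI bF bC PtI PtF PtC : ℝ) (x : Pt) : Prop :=
  0 ≤ x.k ∧ x.k ≤ x.m ∧ x.m ≤ B ∧
  bI < x.PpI ∧ 0 < x.PcI ∧ x.PpI + x.PcI ≤ PtI ∧
  bF < x.PpF ∧ 0 < x.PcF ∧ x.PpF + x.PcF ≤ PtF ∧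
  bC < x.PpC ∧ x.PpC ≤ PtC

/-- IoT-layer latency. -/
noncomputable def TIoT (B β cI aI bI : ℝ) (x : Pt) : ℝ :=
  cI * (B - x.m) * ((x.PpI - bI) / aI) ^ (-(1 / β))

/-- Fog-layer latency. -/
noncomputable def TFog (β cF aF bF WIF g : ℝ) (x : Pt) : ℝ :=
  x.m / (WIF * Real.logb 2 (1 + g * x.PcI)) +
    cF * (x.m - x.k) * ((x.PpF - bF) / aF) ^ (-(1 / β))

/-- Cloud-layer latency. -/
noncomputable def TCloud (β cC aC bC WIF WFC g h : ℝ) (x : Pt) : ℝ :=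
  x.m / (WIF * Real.logb 2 (1 + g * x.PcI)) +
    x.k / (WFC * Real.logb 2 (1 + h * x.PcF)) +
    cC * x.k * ((x.PpC - bC) / aC) ^ (-(1 / β))

/-- Total latency `T = max (T_I, T_F, T_C)`. -/
noncomputable def Ttot (B β cI cF cC aI aF aC bI bF bC WIF WFC g h : ℝ) (x : Pt) : ℝ :=
  max (TIoT B β cI aI bI x) (max (TFog β cF aF bF WIF g x) (TCloud β cC aC bC WIF WFC g h x))

/-- Per-bit processing time strictly decreases in the processing power. -/
lemma processing_time_strictAnti {β a b p q : ℝ} (hβ : 0 < β) (ha : 0 < a) (hp : b < p)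
    (hpq : p < q) : ((q - b) / a) ^ (-(1 / β)) < ((p - b) / a) ^ (-(1 / β)) := by
  apply Real.rpow_lt_rpow_of_neg
  · exact div_pos (by linarith) ha
  · exact div_lt_div_of_pos_right (by linarith) ha
  · have : 0 < 1 / β := by positivity
    linarith

lemma rate_pos {W g p : ℝ} (hW : 0 < W) (hg : 0 < g) (hp : 0 < p) :
    0 < W * Real.logb 2 (1 + g * p) := by
  have : 0 < g * p := by positivity
  exact mul_pos hW (Real.logb_pos (by norm_num) (by linarith))

lemma transmission_time_strictAnti {m W g p q : ℝ} (hm : 0 < m) (hW : 0 < W) (hg : 0 < g)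
    (hp : 0 < p) (hpq : p < q) :
    m / (W * Real.logb 2 (1 + g * q)) < m / (W * Real.logb 2 (1 + g * p)) := by
  apply div_lt_div_of_pos_left hm (rate_pos hW hg hp)
  apply mul_lt_mul_of_pos_left _ hW
  have h1 : 0 < g * p := by positivity
  exact Real.logb_lt_logb (by norm_num) (by linarith)
    (by linarith [mul_lt_mul_of_pos_left hpq hg])

/-- Lemma 1 (IoT layer): at an optimal point, `P_pI + P_cI = P_tI`. -/
theorem iot_power_constraint_tight_at_optimum
    (B β cI cF cC aI aF aC bI bF bC WIF WFC g h PtI PtF PtC : ℝ)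
    (hB : 0 < B) (hβ : 0 < β)
    (hcI : 0 < cI) (hcF : 0 < cF) (hcC : 0 < cC)
    (haI : 0 < aI) (haF : 0 < aF) (haC : 0 < aC)
    (hbI : 0 ≤ bI) (hbF : 0 ≤ bF) (hbC : 0 ≤ bC)
    (hWIF : 0 < WIF) (hWFC : 0 < WFC)
    (hg : 0 < g) (hh : 0 < h)
    (hPtI : bI < PtI) (hPtF : bF < PtF) (hPtC : bC < PtC)
    (x : Pt) (hx : Feasible B bI bF bC PtI PtF PtC x)
    (hopt : ∀ y : Pt, Feasible B bI bF bC PtI PtF PtC y → Ttot B β cI cF cC aI aF aC bI bF bC WIF WFC g h x ≤ Ttot B β cI cF cC aI aF aC bI bF bC WIF WFC g h y) :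
    x.PpI + x.PcI = PtI := by
  obtain ⟨hk, hkm, hmB, hpI, hcIp, hsum, hpF, hcFp, hsumF, hpC, hpCt⟩ := hx
  by_contra hne
  have hslack : x.PpI + x.PcI < PtI := lt_of_le_of_ne hsum hne
  set δ : ℝ := (PtI - (x.PpI + x.PcI)) / 2 with hδ
  have hδpos : 0 < δ := by rw [hδ]; linarith
  have hm0 : 0 ≤ x.m := hk.trans hkm
  have hpow : 0 < ((x.PpI - bI) / aI) ^ (-(1 / β)) :=
    Real.rpow_pos_of_pos (div_pos (by linarith) haI) _
  have hpowF : 0 < ((x.PpF - bF) / aF) ^ (-(1 / β)) :=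
    Real.rpow_pos_of_pos (div_pos (by linarith) haF) _
  have hTI : TIoT B β cI aI bI x ≤ Ttot B β cI cF cC aI aF aC bI bF bC WIF WFC g h x :=
    le_max_left _ _
  have hTF : TFog β cF aF bF WIF g x ≤ Ttot B β cI cF cC aI aF aC bI bF bC WIF WFC g h x :=
    (le_max_left _ _).trans (le_max_right _ _)
  have hTC : TCloud β cC aC bC WIF WFC g h x
      ≤ Ttot B β cI cF cC aI aF aC bI bF bC WIF WFC g h x :=
    (le_max_right _ _).trans (le_max_right _ _)
  have hTpos : 0 < Ttot B β cI cF cC aI aF aC bI bF bC WIF WFC g h x := by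
    rcases hm0.eq_or_lt with hm | hm
    · refine lt_of_lt_of_le ?_ hTI
      unfold TIoT
      exact mul_pos (mul_pos hcI (by linarith)) hpow
    · refine lt_of_lt_of_le ?_ hTF
      unfold TFog
      exact add_pos_of_pos_of_nonneg (div_pos hm (rate_pos hWIF hg hcIp))
        (mul_nonneg (mul_nonneg hcF.le (by linarith)) hpowF.le)
  let y : Pt := { x with PpI := x.PpI + δ, PcI := x.PcI + δ }
  have hy : Feasible B bI bF bC PtI PtF PtC y := by
    refine ⟨hk, hkm, hmB, ?_, ?_, ?_, hpF, hcFp, hsumF, hpC, hpCt⟩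
    · change bI < x.PpI + δ
      linarith
    · change 0 < x.PcI + δ
      linarith
    · change x.PpI + δ + (x.PcI + δ) ≤ PtI
      linarith
  refine absurd (hopt y hy) (not_le.mpr (max_lt ?_ (max_lt ?_ ?_)))
  · rcases hmB.eq_or_lt with hm | hm
    · simpa [TIoT, y, hm] using hTpos
    · refine lt_of_lt_of_le ?_ hTI
      exact mul_lt_mul_of_pos_left
        (processing_time_strictAnti hβ haI hpI (lt_add_of_pos_right _ hδpos))
        (mul_pos hcI (sub_pos.mpr hm))
  · rcases hm0.eq_or_lt with hm | hm
    · have hk0 : x.k = 0 := by linarith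
      simpa [TFog, y, ← hm, hk0] using hTpos
    · refine lt_of_lt_of_le ?_ hTF
      exact add_lt_add_left
        (transmission_time_strictAnti hm hWIF hg hcIp (lt_add_of_pos_right _ hδpos)) _
  · rcases hm0.eq_or_lt with hm | hm
    · have hk0 : x.k = 0 := by linarith
      simpa [TCloud, y, ← hm, hk0] using hTpos
    · refine lt_of_lt_of_le ?_ hTC
      exact add_lt_add_left (add_lt_add_left
        (transmission_time_strictAnti hm hWIF hg hcIp (lt_add_of_pos_right _ hδpos)) _) _
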